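/- (Hytönen–Kairema dyadic cubes) Let (X,d) be a geometrically doubling metric space. Fix constants 0 < c₀ < C₀ < ∞ and δ > 1 such that 18 C₀ δ^{−1} ≤ c₀. For each k ∈ ℤ let I_k be an index set and let {z_α^k ∈ X : α ∈ I_k, k ∈ ℤ} be a collection of points such that d(z_α^k, z_β^k) ≥ c₀ δ^k whenever α ≠ β, and for every x ∈ X and every k ∈ ℤ there exists α ∈ I_k with d(x, z_α^k) < C₀ δ^k. Then, with a₀ := c₀/3 and C₁ := 2C₀, there exists a family of sets {Q_α^k : α ∈ I_k, k ∈ ℤ} such that: (1) for every k ∈ ℤ, ∪_{α ∈ I_k} Q_α^k = X; (2) if k ≤ l then for all α ∈ I_k, β ∈ I_l, either Q_α^k ⊆ Q_β^l or Q_α^k ∩ Q_β^l = ∅; (3) for each pair (k,α) and each integer n > k there is a unique β ∈ I_n with Q_α^k ⊆ Q_β^n; (4) B(z_α^k, a₀ δ^k) ⊆ Q_α^k ⊆ B(z_α^k, C₁ δ^k) for all k ∈ ℤ and α ∈ I_k. -/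

import Mathlib

open MeasureTheory Metric ENNReal

/-!
Each net point of generation `k` is given a parent in generation `k + 1`: a net point within the
covering radius, and the one within half the separation distance whenever there is such a one.
Following parents upwards from a net point close to `x`, the ancestors stay close to `x`, because
the distances travelled form a geometric series. Only finitely many net points of a generation are
close to `x`, so by compactness there is an ancestral line through *all* generations that stays
close to `x`. Fix one such line for every `x`; the cube `Q_α^k` consists of the points whose line
passes through `α` in generation `k`. Lines that meet coincide from then on, so cubes are nested. If
`x` is very close to `z_α^k`, then so is the net point of generation `k - 1` on its line, whose
parent is therefore `α`.
-/

section Nets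

variable {X J : Type*} [PseudoMetricSpace X] {z : J → X} {ε : ℝ}

lemma subsingleton_preimage_ball_half (hz : Pairwise fun α β ↦ ε ≤ dist (z α) (z β)) (x : X) :
    (z ⁻¹' ball x (ε / 2)).Subsingleton := by
  intro α hα β hβ
  by_contra hne
  have hclose : dist (z α) (z β) < ε / 2 + ε / 2 :=
    (dist_triangle_right _ _ x).trans_lt (add_lt_add hα hβ)
  linarith [hz hne]

lemma finite_preimage_of_totallyBounded (hz : Pairwise fun α β ↦ ε ≤ dist (z α) (z β))
    (hε : 0 < ε) {s : Set X} (hs : TotallyBounded s) : (z ⁻¹' s).Finite := by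
  obtain ⟨t, ht, hst⟩ := totallyBounded_iff.1 hs (ε / 2) (half_pos hε)
  refine (ht.biUnion fun y _ ↦ (subsingleton_preimage_ball_half hz y).finite).subset ?_
  simpa only [Set.preimage_iUnion₂] using Set.preimage_mono (f := z) hst

lemma exists_dist_lt_and_preimage_ball_half_subset
    (hz : Pairwise fun α β ↦ ε ≤ dist (z α) (z β)) {r : ℝ} {x : X}
    (hr : ∃ α, dist x (z α) < r) :
    ∃ α, dist x (z α) < r ∧ z ⁻¹' ball x (ε / 2) ⊆ {α} := by
  obtain ⟨β, hβ⟩ := hr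
  rcases (z ⁻¹' ball x (ε / 2)).eq_empty_or_nonempty with hempty | ⟨α, hα⟩
  · exact ⟨β, hβ, hempty ▸ Set.empty_subset _⟩
  have hunique := subsingleton_preimage_ball_half hz x
  refine ⟨α, ?_, fun γ hγ ↦ hunique hγ hα⟩
  rcases lt_or_ge (dist (z β) x) (ε / 2) with hnear | hfar
  · rwa [hunique hα hnear]
  · calc dist x (z α) = dist (z α) x := dist_comm _ _
      _ < ε / 2 := hα
      _ ≤ dist x (z β) := by rwa [dist_comm]
      _ < r := hβ

end Nets

section Doubling

variable {X : Type*} [PseudoMetricSpace X]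

lemma exists_finite_closedBall_subset_iUnion_div_two_pow
    (h : ∀ (x : X) (r : ℝ), 0 < r → ∃ s : Set X, s.Finite ∧
      closedBall x r ⊆ ⋃ y ∈ s, closedBall y (r / 2))
    (x : X) {r : ℝ} (hr : 0 < r) (n : ℕ) :
    ∃ t : Set X, t.Finite ∧ closedBall x r ⊆ ⋃ y ∈ t, closedBall y (r / 2 ^ n) := by
  induction n with
  | zero => exact ⟨{x}, Set.finite_singleton x, by simp⟩
  | succ n ih =>
    obtain ⟨t, ht, hxt⟩ := ih
    choose s hs hys using fun y ↦ h y (r / 2 ^ n) (by positivity)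
    refine ⟨⋃ y ∈ t, s y, ht.biUnion fun y _ ↦ hs y, ?_⟩
    calc closedBall x r ⊆ ⋃ y ∈ t, closedBall y (r / 2 ^ n) := hxt
      _ ⊆ ⋃ y ∈ t, ⋃ w ∈ s y, closedBall w (r / 2 ^ n / 2) := Set.iUnion₂_mono fun y _ ↦ hys y
      _ = ⋃ w ∈ ⋃ y ∈ t, s y, closedBall w (r / 2 ^ (n + 1)) := by
        simp only [Set.biUnion_iUnion, div_div, pow_succ]

lemma totallyBounded_closedBall_of_forall_subset_iUnion_half
    (h : ∀ (x : X) (r : ℝ), 0 < r → ∃ s : Set X, s.Finite ∧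
      closedBall x r ⊆ ⋃ y ∈ s, closedBall y (r / 2))
    (x : X) (r : ℝ) : TotallyBounded (closedBall x r) := by
  suffices hpos : ∀ ρ > 0, TotallyBounded (closedBall x ρ) from
    (hpos (max r 1) (by positivity)).subset (closedBall_subset_closedBall (le_max_left r 1))
  refine fun ρ hρ ↦ totallyBounded_iff.2 fun ε hε ↦ ?_
  obtain ⟨n, hn⟩ := pow_unbounded_of_one_lt (ρ / ε) one_lt_two
  have hsmall : ρ / 2 ^ n < ε := (div_lt_comm₀ hε (by positivity)).1 hn
  obtain ⟨t, ht, hxt⟩ := exists_finite_closedBall_subset_iUnion_div_two_pow h x hρ n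
  exact ⟨t, ht, hxt.trans (Set.iUnion₂_mono fun y _ ↦ closedBall_subset_ball hsmall)⟩

end Doubling

section Lineages

variable {I : ℤ → Type*} {p : ∀ k, I k → I (k + 1)}

/-- A lineage of the parent maps `p`: a choice of one index in every generation `k : ℤ`, each index
being the parent of the one before it. Dyadic cubes are built from a lineage for every point. -/
def IsLineage (p : ∀ k, I k → I (k + 1)) (b : ∀ k, I k) : Prop :=
  ∀ k, b (k + 1) = p k (b k)

lemma IsLineage.eq_of_le {b c : ∀ k, I k} (hb : IsLineage p b) (hc : IsLineage p c) {k l : ℤ}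
    (hkl : k ≤ l) (h : b k = c k) : b l = c l := by
  induction l, hkl using Int.leInduction with
  | base => exact h
  | succ l _ ih => rw [hb, hc, ih]

lemma exists_mem_and_forall_finset_eq_parent {F : ∀ k, Set (I k)} (hne : ∀ k, (F k).Nonempty)
    (hmaps : ∀ k, Set.MapsTo (p k) (F k) (F (k + 1))) (u : Finset ℤ) :
    ∃ b : ∀ k, I k, (∀ k, b k ∈ F k) ∧ ∀ k ∈ u, b (k + 1) = p k (b k) := by
  -- Adding the largest generation last, redefining `b (m + 1)` spoils no earlier equation.
  induction u using Finset.induction_on_max with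
  | empty =>
    choose b hb using hne
    exact ⟨b, hb, by simp⟩
  | insert m u hm ih =>
    obtain ⟨b, hb, hbp⟩ := ih
    refine ⟨Function.update b (m + 1) (p m (b m)), ?_, ?_⟩
    · exact (Function.forall_update_iff b fun k α ↦ α ∈ F k).2
        ⟨hmaps m (hb m), fun k _ ↦ hb k⟩
    · intro k hk
      rcases Finset.mem_insert.1 hk with rfl | hku
      · simp
      · have hkm := hm k hku
        rw [Function.update_of_ne (by lia), Function.update_of_ne (by lia)]
        exact hbp k hku

lemma exists_isLineage_forall_mem {F : ∀ k, Set (I k)} (hfin : ∀ k, (F k).Finite)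
    (hne : ∀ k, (F k).Nonempty) (hmaps : ∀ k, Set.MapsTo (p k) (F k) (F (k + 1))) :
    ∃ b, IsLineage p b ∧ ∀ k, b k ∈ F k := by
  let _ (k : ℤ) : TopologicalSpace (I k) := ⊥
  have (k : ℤ) : DiscreteTopology (I k) := ⟨rfl⟩
  have hcompact : IsCompact (Set.univ.pi F) := isCompact_univ_pi fun k ↦ (hfin k).isCompact
  have hclosed (k : ℤ) : IsClosed {b : ∀ k, I k | b (k + 1) = p k (b k)} :=
    isClosed_eq (continuous_apply _) (continuous_of_discreteTopology.comp (continuous_apply k))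
  obtain ⟨b, hbF, hbp⟩ := hcompact.inter_iInter_nonempty _ hclosed fun u ↦ by
    obtain ⟨b, hbF, hbp⟩ := exists_mem_and_forall_finset_eq_parent hne hmaps u
    exact ⟨b, fun k _ ↦ hbF k, Set.mem_iInter₂.2 hbp⟩
  exact ⟨b, Set.mem_iInter.1 hbp, fun k ↦ hbF k trivial⟩

lemma exists_isLineage_dist_le {X : Type*} [PseudoMetricSpace X]
    (htb : ∀ (x : X) (ρ : ℝ), TotallyBounded (closedBall x ρ)) {z : ∀ k, I k → X} {ε r R : ℤ → ℝ}
    (hε : ∀ k, 0 < ε k) (hz : ∀ k, Pairwise fun α β ↦ ε k ≤ dist (z k α) (z k β))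
    (hr : ∀ x k, ∃ α, dist x (z k α) < r k)
    (hp : ∀ k α, dist (z k α) (z (k + 1) (p k α)) < r (k + 1))
    (hrR : ∀ k, r k ≤ R k) (hR : ∀ k, R k + r (k + 1) ≤ R (k + 1)) (x : X) :
    ∃ b, IsLineage p b ∧ ∀ k, dist x (z k (b k)) ≤ R k := by
  suffices h : ∃ b, IsLineage p b ∧ ∀ k, b k ∈ z k ⁻¹' closedBall x (R k) by
    simpa only [Set.mem_preimage, mem_closedBall'] using h
  apply exists_isLineage_forall_mem
  · exact fun k ↦ finite_preimage_of_totallyBounded (hz k) (hε k) (htb x (R k))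
  · intro k
    obtain ⟨α, hα⟩ := hr x k
    exact ⟨α, mem_closedBall'.2 (hα.le.trans (hrR k))⟩
  · intro k α hα
    refine mem_closedBall'.2 ?_
    calc dist x (z (k + 1) (p k α))
        ≤ dist x (z k α) + dist (z k α) (z (k + 1) (p k α)) := dist_triangle _ _ _
      _ ≤ R k + r (k + 1) := add_le_add (mem_closedBall'.1 hα) (hp k α).le
      _ ≤ R (k + 1) := hR k

lemma IsLineage.eq_of_dist_le {X : Type*} [PseudoMetricSpace X] {z : ∀ k, I k → X}
    {ε R a : ℤ → ℝ} (hp : ∀ k α, z (k + 1) ⁻¹' ball (z k α) (ε (k + 1) / 2) ⊆ {p k α})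
    (haR : ∀ k, a (k + 1) + R k < ε (k + 1) / 2) {b : ∀ k, I k} (hb : IsLineage p b) {x : X}
    (hxb : ∀ k, dist x (z k (b k)) ≤ R k) {k : ℤ} {α : I k} (hα : dist x (z k α) ≤ a k) :
    b k = α := by
  obtain ⟨j, rfl⟩ : ∃ j, k = j + 1 := ⟨k - 1, by ring⟩
  have hclose : dist (z (j + 1) α) (z j (b j)) < ε (j + 1) / 2 :=
    calc dist (z (j + 1) α) (z j (b j))
        ≤ dist x (z (j + 1) α) + dist x (z j (b j)) := dist_triangle_left _ _ _
      _ ≤ a (j + 1) + R j := add_le_add hα (hxb j)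
      _ < ε (j + 1) / 2 := haR j
  exact (hb j).trans (hp j (b j) hclose).symm

end Lineages

section Cubes

variable {X : Type*} {I : ℤ → Type*} {p : ∀ k, I k → I (k + 1)} {A : X → ∀ k, I k}

/-- The dyadic cube `Q_α^k` of a family `A` assigning a lineage to every point: the points whose
lineage passes through `α` in generation `k`. -/
def lineageCube (A : X → ∀ k, I k) (k : ℤ) (α : I k) : Set X :=
  {x | A x k = α}

lemma iUnion_lineageCube (A : X → ∀ k, I k) (k : ℤ) : ⋃ α, lineageCube A k α = Set.univ :=
  Set.iUnion_eq_univ_iff.2 fun x ↦ ⟨A x k, rfl⟩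

lemma lineageCube_subset_of_mem (hA : ∀ x, IsLineage p (A x)) {k l : ℤ} (hkl : k ≤ l) {α : I k}
    {β : I l} {x : X} (hxα : x ∈ lineageCube A k α) (hxβ : x ∈ lineageCube A l β) :
    lineageCube A k α ⊆ lineageCube A l β :=
  fun y hy ↦ ((hA y).eq_of_le (hA x) hkl (Eq.trans hy (Eq.symm hxα))).trans hxβ

lemma lineageCube_subset_or_inter_eq_empty (hA : ∀ x, IsLineage p (A x)) {k l : ℤ} (hkl : k ≤ l)
    (α : I k) (β : I l) :
    lineageCube A k α ⊆ lineageCube A l β ∨ lineageCube A k α ∩ lineageCube A l β = ∅ := by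
  rcases (lineageCube A k α ∩ lineageCube A l β).eq_empty_or_nonempty with hempty | ⟨x, hxα, hxβ⟩
  · exact .inr hempty
  · exact .inl (lineageCube_subset_of_mem hA hkl hxα hxβ)

lemma existsUnique_lineageCube_subset (hA : ∀ x, IsLineage p (A x)) {k l : ℤ} (hkl : k ≤ l)
    {α : I k} (hα : (lineageCube A k α).Nonempty) :
    ∃! β : I l, lineageCube A k α ⊆ lineageCube A l β := by
  obtain ⟨x, hx⟩ := hα
  exact ⟨A x l, lineageCube_subset_of_mem hA hkl hx rfl, fun β hβ ↦ (hβ hx).symm⟩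

end Cubes

lemma mul_zpow_le_mul_zpow_add_one {a c δ : ℝ} (hδ : 0 < δ) (h : a ≤ c * δ) (k : ℤ) :
    a * δ ^ k ≤ c * δ ^ (k + 1) := by
  calc a * δ ^ k ≤ c * δ * δ ^ k := mul_le_mul_of_nonneg_right h (zpow_pos hδ k).le
    _ = c * δ ^ (k + 1) := by rw [zpow_add_one₀ hδ.ne']; ring

theorem stmt_8_general {X : Type*} [PseudoMetricSpace X]
    (htb : ∀ (x : X) (ρ : ℝ), TotallyBounded (closedBall x ρ))
    {I : ℤ → Type*} {z : ∀ k, I k → X} {ε r a R : ℤ → ℝ}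
    (hε : ∀ k, 0 < ε k) (hz : ∀ k, Pairwise fun α β ↦ ε k ≤ dist (z k α) (z k β))
    (hr : ∀ x k, ∃ α, dist x (z k α) < r k)
    (ha : ∀ k, 0 ≤ a k) (haR : ∀ k, a (k + 1) + R k < ε (k + 1) / 2)
    (hrR : ∀ k, r k ≤ R k) (hR : ∀ k, R k + r (k + 1) ≤ R (k + 1)) :
    ∃ Q : ∀ k : ℤ, I k → Set X,
      (∀ k, (⋃ α, Q k α) = Set.univ) ∧
      (∀ k l, k ≤ l → ∀ (α : I k) (β : I l), Q k α ⊆ Q l β ∨ Q k α ∩ Q l β = ∅) ∧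
      (∀ k (α : I k) n, k < n → ∃! β : I n, Q k α ⊆ Q n β) ∧
      (∀ k α, closedBall (z k α) (a k) ⊆ Q k α ∧ Q k α ⊆ closedBall (z k α) (R k)) := by
  choose p hp hp_unique using fun k (α : I k) ↦
    exists_dist_lt_and_preimage_ball_half_subset (hz (k + 1)) (hr (z k α) (k + 1))
  choose A hA hAR using exists_isLineage_dist_le htb hε hz hr hp hrR hR
  have inner (k : ℤ) (α : I k) : closedBall (z k α) (a k) ⊆ lineageCube A k α :=
    fun x hx ↦ (hA x).eq_of_dist_le hp_unique haR (hAR x) hx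
  have outer (k : ℤ) (α : I k) : lineageCube A k α ⊆ closedBall (z k α) (R k) := by
    rintro x rfl
    exact hAR x k
  refine ⟨lineageCube A, iUnion_lineageCube A, fun k l ↦ lineageCube_subset_or_inter_eq_empty hA,
    fun k α n hkn ↦ existsUnique_lineageCube_subset hA hkn.le ?_,
    fun k α ↦ ⟨inner k α, outer k α⟩⟩
  exact ⟨z k α, inner k α (mem_closedBall_self (ha k))⟩

/-- **Hytönen–Kairema dyadic cubes.** Let `(X,d)` be a geometrically doubling
metric space, let `0 < c₀ < C₀ < ∞` and `δ > 1` with `18 C₀ δ⁻¹ ≤ c₀`, and let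
`{z_α^k : α ∈ I_k, k ∈ ℤ}` be a collection of points that is `c₀ δ^k`-separated in each
generation `k` and `C₀ δ^k`-dense. Then, with `a₀ = c₀/3` and `C₁ = 2C₀`, there is a family of
sets `Q_α^k` covering `X` in each generation, nested across generations, each cube having a
unique ancestor in every later generation, and sandwiched between the balls
`B(z_α^k, a₀ δ^k)` and `B(z_α^k, C₁ δ^k)`. -/
theorem stmt_8 {X : Type*} [MetricSpace X]
    (D₀ : ℕ)
    (hgd : ∀ (x : X) (r : ℝ), 0 < r → ∃ s : Finset X, s.card ≤ D₀ ∧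
      closedBall x r ⊆ ⋃ y ∈ s, closedBall y (r / 2))
    (c₀ C₀ δ : ℝ) (hc₀ : 0 < c₀) (hcC : c₀ < C₀) (hδ : 1 < δ)
    (hsep : 18 * C₀ * δ⁻¹ ≤ c₀)
    (I : ℤ → Type*) (z : ∀ k, I k → X)
    (hzsep : ∀ (k : ℤ) (α β : I k), α ≠ β → c₀ * δ ^ k ≤ dist (z k α) (z k β))
    (hzdense : ∀ (x : X) (k : ℤ), ∃ α : I k, dist x (z k α) < C₀ * δ ^ k) :
    ∃ Q : ∀ k : ℤ, I k → Set X,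
      (∀ k : ℤ, (⋃ α : I k, Q k α) = Set.univ) ∧
      (∀ k l : ℤ, k ≤ l → ∀ (α : I k) (β : I l), Q k α ⊆ Q l β ∨ Q k α ∩ Q l β = ∅) ∧
      (∀ (k : ℤ) (α : I k) (n : ℤ), k < n → ∃! β : I n, Q k α ⊆ Q n β) ∧
      (∀ (k : ℤ) (α : I k),
        closedBall (z k α) ((c₀ / 3) * δ ^ k) ⊆ Q k α ∧
        Q k α ⊆ closedBall (z k α) ((2 * C₀) * δ ^ k)) := by
  have hδ₀ : 0 < δ := one_pos.trans hδ
  have hpow (k : ℤ) : 0 < δ ^ k := zpow_pos hδ₀ k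
  have hC₀ (k : ℤ) : 0 < C₀ * δ ^ k := mul_pos (hc₀.trans hcC) (hpow k)
  have hc₀δ : 18 * C₀ ≤ c₀ * δ := (mul_inv_le_iff₀ hδ₀).1 hsep
  have hC₀δ : 2 * C₀ ≤ C₀ * δ := by linarith [mul_lt_mul_of_pos_right hcC hδ₀]
  have htb := totallyBounded_closedBall_of_forall_subset_iUnion_half fun x r hr ↦
    let ⟨s, _, hs⟩ := hgd x r hr
    ⟨s, s.finite_toSet, hs⟩
  refine stmt_8_general htb (fun k ↦ mul_pos hc₀ (hpow k)) (fun k α β ↦ hzsep k α β) hzdense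
    (fun k ↦ (mul_pos (by positivity) (hpow k)).le) (fun k ↦ ?inner)
    (fun k ↦ ?covering) (fun k ↦ ?outer)
  case inner => linarith [hC₀ k, mul_zpow_le_mul_zpow_add_one hδ₀ hc₀δ k]
  case covering => linarith [hC₀ k]
  case outer => linarith [mul_zpow_le_mul_zpow_add_one hδ₀ hC₀δ k]
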